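/- arXiv:0912.0061 — 2 statements merged into one kernel-verified Lean document; each statement's English description precedes it below -/
import Mathlib

section
/- Let Y be a topological space, let h : Y → Y be a homeomorphism with north–south dynamics with attracting fixed point p⁺ and repelling fixed point p⁻, and let V be a nonempty connected open subset of Y with p⁺ ∈ V and p⁻ ∉ closure(V). Then Y is locally connected at p⁺; that is, every neighborhood of p⁺ contains a connected open neighborhood of p⁺ (namely hⁿ(V) for some n ∈ ℕ). -/
/-!
The set `(closure V)ᶜ` is an open neighborhood of the repelling point `q`, and its complement
contains `V`, so the iterates of `f` squeeze `V` into any prescribed neighborhood of the attracting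
point `p`. The sets `fⁿ(V)` remain open and connected because `f` is open and continuous, and they
contain `p` because `f` fixes `p`.
-/

open Filter Topology

theorem isOpenMap_iterate {X : Type*} [TopologicalSpace X] {f : X → X} (hf : IsOpenMap f) (n : ℕ) :
    IsOpenMap f^[n] := by
  induction n with
  | zero => exact IsOpenMap.id
  | succ n ih => exact ih.comp hf

theorem eventually_image_subset_of_notMem_closure {ι X Y : Type*} [TopologicalSpace X]
    {l : Filter ι} {F : ι → X → Y} {q : X} {U : Set Y} {V : Set X}
    (hF : ∀ W : Set X, IsOpen W → q ∈ W → ∀ᶠ i in l, F i '' Wᶜ ⊆ U) (hq : q ∉ closure V) :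
    ∀ᶠ i in l, F i '' V ⊆ U := by
  filter_upwards [hF (closure V)ᶜ isClosed_closure.isOpen_compl hq] with i hi
  rw [compl_compl] at hi
  exact (Set.image_mono subset_closure).trans hi

theorem locally_connected_of_north_south_general {Y : Type*} [TopologicalSpace Y] {f : Y → Y}
    (hf : Continuous f) (hf_open : IsOpenMap f) {p q : Y} (hp : f p = p)
    (hNS : ∀ U : Set Y, IsOpen U → p ∈ U → ∀ W : Set Y, IsOpen W → q ∈ W →
      ∀ᶠ n in atTop, f^[n] '' Wᶜ ⊆ U)
    {V : Set Y} (hVconn : IsConnected V) (hV : IsOpen V) (hpV : p ∈ V) (hqV : q ∉ closure V) :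
    ∀ U ∈ 𝓝 p, ∀ᶠ n in atTop, IsOpen (f^[n] '' V) ∧ p ∈ f^[n] '' V ∧
      IsConnected (f^[n] '' V) ∧ f^[n] '' V ⊆ U := by
  intro U hU
  obtain ⟨U', hU'U, hU'_open, hpU'⟩ := mem_nhds_iff.mp hU
  have h_squeeze : ∀ᶠ n in atTop, f^[n] '' V ⊆ U' :=
    eventually_image_subset_of_notMem_closure (hNS U' hU'_open hpU') hqV
  filter_upwards [h_squeeze] with n hn
  exact ⟨isOpenMap_iterate hf_open n V hV, ⟨p, hpV, Function.iterate_fixed hp n⟩,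
    hVconn.image _ (hf.iterate n).continuousOn, hn.trans hU'U⟩

/-- If `h` is a homeomorphism of `Y` with north–south dynamics with attracting
fixed point `p⁺` and repelling fixed point `p⁻`, and `V` is a nonempty connected open set with
`p⁺ ∈ V` and `p⁻ ∉ closure V`, then `Y` is locally connected at `p⁺`: every neighborhood of
`p⁺` contains a connected open neighborhood of `p⁺`, namely `hⁿ(V)` for some `n`. -/
theorem locally_connected_of_north_south {Y : Type*} [TopologicalSpace Y] (h : Y ≃ₜ Y)
    (pPlus pMinus : Y) (hne : pPlus ≠ pMinus)
    (hfixPlus : h pPlus = pPlus) (hfixMinus : h pMinus = pMinus)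
    (hNS : ∀ U : Set Y, IsOpen U → pPlus ∈ U → ∀ W : Set Y, IsOpen W → pMinus ∈ W →
      ∃ N : ℕ, ∀ n ≥ N, (⇑h)^[n] '' Wᶜ ⊆ U)
    (V : Set Y) (hVne : V.Nonempty) (hVconn : IsConnected V) (hV : IsOpen V)
    (hpV : pPlus ∈ V) (hpM : pMinus ∉ closure V) :
    ∀ U ∈ nhds pPlus, ∃ n : ℕ, IsOpen ((⇑h)^[n] '' V) ∧ pPlus ∈ (⇑h)^[n] '' V ∧
      IsConnected ((⇑h)^[n] '' V) ∧ (⇑h)^[n] '' V ⊆ U := fun U hU =>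
  (locally_connected_of_north_south_general h.continuous h.isOpenMap hfixPlus
    (fun O hO hpO W hW hqW => eventually_atTop.mpr (hNS O hO hpO W hW hqW))
    hVconn hV hpV hpM U hU).exists
end

section
/- Let n ≥ 1, let Y be a compact metric space, and let G be a group acting on Y by homeomorphisms such that the action gives Y a topological fractal structure. Suppose Y contains a closed subset U with nonempty interior such that U (with the subspace topology) is homeomorphic to the closed unit ball in Euclidean n-space. Then Y is homeomorphic to the n-sphere, i.e., to the unit sphere in Euclidean (n+1)-space. -/
open Pointwise

/-!
Since every proper closed subset of `Y` can be moved into a chart, `Y` is compact and Hausdorff, and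
the complement of any small ball lies in an open cell which is not all of `Y`. A point missed by
that cell lies in the small ball; sliding it there onto the centre `p` of the ball shows that every
compact subset of `Y \ {p}` lies in an open cell of `Y \ {p}`. By Brown's monotone union theorem
`Y \ {p}` is then a Euclidean space, and `Y` is its one-point compactification.
-/

open Set Metric Filter Topology Module

section OpenEmbedding

variable {X Y Z : Type*} [TopologicalSpace X] [TopologicalSpace Y] [TopologicalSpace Z]

lemma isOpenEmbedding_of_comp_isEmbedding {f : X → Y} {g : Y → Z} (hg : IsEmbedding g)
    (hgf : IsOpenEmbedding (g ∘ f)) : IsOpenEmbedding f := by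
  refine ⟨hg.of_comp_iff.1 hgf.isEmbedding, ?_⟩
  have hrange : range f = g ⁻¹' range (g ∘ f) := by
    rw [range_comp, preimage_image_eq _ hg.injective]
  exact hrange ▸ hgf.isOpen_range.preimage hg.continuous

lemma isOpenEmbedding_subtypeVal_comp {U : Set Y} {f : X → U} (hf : IsOpenEmbedding f)
    (hfU : ∀ x, (f x : Y) ∈ interior U) : IsOpenEmbedding (Subtype.val ∘ f) := by
  refine .of_isEmbedding_isOpenMap (IsEmbedding.subtypeVal.comp hf.isEmbedding)
    (isOpenMap_iff_nhds_le.2 fun x ↦ ?_)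
  rw [← map_map, hf.map_nhds_eq,
    map_nhds_subtype_coe_eq_nhds (f x).2 (mem_interior_iff_mem_nhds.1 (hfU x))]
  rfl

lemma exists_isOpenEmbedding_of_eqOn {V : ℕ → Set X} (hV : Monotone V) (hVx : ∀ x, ∃ k, V k ∈ 𝓝 x)
    {H : ℕ → X → Y} (hH : ∀ k, IsOpenEmbedding (H k)) (hs : ∀ k, EqOn (H (k + 1)) (H k) (V k)) :
    ∃ h : X → Y, IsOpenEmbedding h ∧ ∀ k, EqOn h (H k) (V k) := by
  have agree {k m : ℕ} (hkm : k ≤ m) : EqOn (H m) (H k) (V k) := by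
    induction m, hkm using Nat.le_induction with
    | base => exact eqOn_refl _ _
    | succ m hm ih => exact ((hs m).mono (hV hm)).trans ih
  choose k hk using hVx
  let h : X → Y := fun x ↦ H (k x) x
  have hEq (m : ℕ) : EqOn h (H m) (V m) := fun x hx ↦ by
    rcases le_total (k x) m with hm | hm
    · exact (agree hm (mem_of_mem_nhds (hk x))).symm
    · exact agree hm hx
  have hloc (x : X) : h =ᶠ[𝓝 x] H (k x) := (hEq (k x)).eventuallyEq_of_mem (hk x)
  have hinj : Function.Injective h := fun x y hxy ↦ by
    have hx := hV (le_max_left (k x) (k y)) (mem_of_mem_nhds (hk x))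
    have hy := hV (le_max_right (k x) (k y)) (mem_of_mem_nhds (hk y))
    exact (hH _).injective (by rwa [← hEq _ hx, ← hEq _ hy])
  refine ⟨h, .of_continuous_injective_isOpenMap ?_ hinj ?_, hEq⟩
  · exact continuous_iff_continuousAt.2 fun x ↦
      ((hH _).continuous.continuousAt).congr (hloc x).symm
  · refine isOpenMap_iff_nhds_le.2 fun x ↦ ?_
    rw [Filter.map_congr (hloc x), (hloc x).eq_of_nhds, (hH _).map_nhds_eq]

lemma continuous_viaEmbedding [T2Space Y] {f : X → Y} (hf : IsOpenEmbedding f) (T : X ≃ₜ X)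
    {K : Set X} (hK : IsCompact K) (hT : ∀ x ∉ K, T x = x) :
    Continuous (Equiv.Perm.viaEmbedding T.toEquiv ⟨f, hf.injective⟩) := by
  set Θ := Equiv.Perm.viaEmbedding T.toEquiv ⟨f, hf.injective⟩
  have hΘf (x : X) : Θ (f x) = f (T x) := Equiv.Perm.viaEmbedding_apply _ ⟨f, hf.injective⟩ x
  have hΘ {y : Y} (hy : y ∉ range f) : Θ y = y := Equiv.Perm.viaEmbedding_apply_of_notMem _ _ y hy
  refine continuous_iff_continuousAt.2 fun y ↦ ?_
  by_cases hy : y ∈ range f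
  · obtain ⟨x, rfl⟩ := hy
    rw [← hf.continuousAt_iff, show Θ ∘ f = f ∘ T from funext hΘf]
    exact (hf.continuous.comp T.continuous).continuousAt
  · have hcompl : (f '' K)ᶜ ∈ 𝓝 y :=
      (hK.image hf.continuous).isClosed.isOpen_compl.mem_nhds fun h ↦ hy (image_subset_range _ _ h)
    refine continuousAt_id.congr (eventually_of_mem hcompl fun z hz ↦ ?_)
    by_cases hzf : z ∈ range f
    · obtain ⟨x, rfl⟩ := hzf
      rw [hΘf, hT x fun hx ↦ hz (mem_image_of_mem f hx), id]
    · exact (hΘ hzf).symm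

lemma exists_homeomorph_extending [T2Space Y] {f : X → Y} (hf : IsOpenEmbedding f) (T : X ≃ₜ X)
    {K : Set X} (hK : IsCompact K) (hT : ∀ x ∉ K, T x = x) :
    ∃ Θ : Y ≃ₜ Y, (∀ x, Θ (f x) = f (T x)) ∧ ∀ y ∉ f '' K, Θ y = y := by
  let ι : X ↪ Y := ⟨f, hf.injective⟩
  have hTsymm : ∀ x ∉ K, T.symm x = x := fun x hx ↦ (T.symm_apply_eq).2 (hT x hx).symm
  have hsymm : (Equiv.Perm.viaEmbedding T.toEquiv ι).symm =
      Equiv.Perm.viaEmbedding T.symm.toEquiv ι :=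
    (map_inv (Equiv.Perm.viaEmbeddingHom ι) T.toEquiv).symm
  let Θ : Y ≃ₜ Y :=
    { toEquiv := Equiv.Perm.viaEmbedding T.toEquiv ι
      continuous_toFun := continuous_viaEmbedding hf T hK hT
      continuous_invFun := by
        change Continuous (Equiv.Perm.viaEmbedding T.toEquiv ι).symm
        exact hsymm ▸ continuous_viaEmbedding hf T.symm hK hTsymm }
  have hΘf (x : X) : Θ (f x) = f (T x) := Equiv.Perm.viaEmbedding_apply T.toEquiv ι x
  refine ⟨Θ, hΘf, fun y hy ↦ ?_⟩
  by_cases hyf : y ∈ range f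
  · obtain ⟨x, rfl⟩ := hyf
    rw [hΘf, hT x fun hx ↦ hy (mem_image_of_mem f hx)]
  · exact Equiv.Perm.viaEmbedding_apply_of_notMem _ ι y hyf

lemma isSigmaCompact_compl_of_isGδ [CompactSpace X] {s : Set X} (hs : IsGδ s) :
    IsSigmaCompact sᶜ := by
  obtain ⟨T, hTopen, hTcount, rfl⟩ := hs
  rw [compl_sInter]
  exact isSigmaCompact_sUnion_of_isCompact (hTcount.image _)
    (forall_mem_image.2 fun t ht ↦ (hTopen t ht).isClosed_compl.isCompact)

end OpenEmbedding

lemma exists_orderIso_real_stretch {a b R S : ℝ} (hab : a < b) (hbR : b < R) (hRS : R < S) :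
    ∃ κ : ℝ ≃o ℝ, (∀ t ≤ a, κ t = t) ∧ (∀ t, S ≤ t → κ t = t) ∧ κ b = R := by
  -- The two lines through `(b, R)` that meet the diagonal at `a`, with slope `m`, and at `S`, with
  -- slope `l`; their minimum exceeds the diagonal exactly on `(a, S)`.
  set m := (R - a) / (b - a) with hm
  set l := (S - R) / (S - b) with hl
  have hm_gt : 1 < m := by rw [hm, one_lt_div (by linarith)]; linarith
  have hl_pos : 0 < l := div_pos (by linarith) (by linarith)
  have hl_lt : l < 1 := by rw [hl, div_lt_one (by linarith)]; linarith
  have hmb : m * (b - a) = R - a := div_mul_cancel₀ _ (by linarith)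
  have hlb : l * (S - b) = S - R := div_mul_cancel₀ _ (by linarith)
  let k : ℝ → ℝ := fun t ↦ max t (min (a + m * (t - a)) (S + l * (t - S)))
  have hk : StrictMono k := fun s t hst ↦
    max_lt_max hst (min_lt_min (by nlinarith) (by nlinarith))
  have hka : ∀ t ≤ a, k t = t := fun t ht ↦ max_eq_left (min_le_of_left_le (by nlinarith))
  have hkS : ∀ t, S ≤ t → k t = t := fun t ht ↦ max_eq_left (min_le_of_right_le (by nlinarith))
  have hsurj : Function.Surjective k := by
    have hcont : Continuous k := by fun_prop
    refine hcont.surjective (tendsto_id.congr' ?_) (tendsto_id.congr' ?_)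
    · filter_upwards [eventually_ge_atTop S] with t ht using (hkS t ht).symm
    · filter_upwards [eventually_le_atBot a] with t ht using (hka t ht).symm
  refine ⟨hk.orderIsoOfSurjective k hsurj, hka, hkS, ?_⟩
  have hleft : a + m * (b - a) = R := by linarith
  have hright : S + l * (b - S) = R := by linarith
  change max b (min (a + m * (b - a)) (S + l * (b - S))) = R
  rw [hleft, hright, min_self, max_eq_right hbR.le]

section NormedSpace

variable {E : Type*} [NormedAddCommGroup E] [NormedSpace ℝ E]

/-- The radial rescaling of a normed space that multiplies norms by `κ t / t` on the sphere of
radius `t`, and so carries it to the sphere of radius `κ t`; it fixes the origin. -/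
noncomputable def radialMap (κ : ℝ → ℝ) (x : E) : E := (κ ‖x‖ / ‖x‖) • x

lemma radialMap_eq_self {κ : ℝ → ℝ} {x : E} (hx : κ ‖x‖ = ‖x‖) : radialMap κ x = x := by
  rcases eq_or_ne x 0 with rfl | hx0
  · exact smul_zero _
  · rw [radialMap, hx, div_self (norm_ne_zero_iff.2 hx0), one_smul]

lemma norm_radialMap {κ : ℝ → ℝ} (h0 : κ 0 = 0) (hκ : Monotone κ) (x : E) :
    ‖radialMap κ x‖ = κ ‖x‖ := by
  rcases eq_or_ne x 0 with rfl | hx0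
  · simp only [radialMap, smul_zero, norm_zero, h0]
  · have hnonneg : 0 ≤ κ ‖x‖ := h0 ▸ hκ (norm_nonneg x)
    rw [radialMap, norm_smul, Real.norm_of_nonneg (by positivity),
      div_mul_cancel₀ _ (norm_ne_zero_iff.2 hx0)]

lemma continuous_radialMap {κ : ℝ → ℝ} (h0 : κ 0 = 0) (hmono : Monotone κ) (hκ : Continuous κ) :
    Continuous (radialMap κ : E → E) := by
  refine continuous_iff_continuousAt.2 fun x ↦ ?_
  have hnorm : Continuous fun y : E ↦ κ ‖y‖ := hκ.comp continuous_norm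
  rcases eq_or_ne x 0 with rfl | hx
  · have hzero : radialMap κ (0 : E) = 0 := smul_zero _
    rw [ContinuousAt, hzero, tendsto_zero_iff_norm_tendsto_zero]
    simpa only [norm_radialMap h0 hmono, norm_zero, h0] using hnorm.tendsto 0
  · exact (hnorm.continuousAt.div continuous_norm.continuousAt (norm_ne_zero_iff.2 hx)).smul
      continuousAt_id

lemma radialMap_symm_radialMap {κ : ℝ ≃o ℝ} (h0 : κ 0 = 0) (x : E) :
    radialMap κ.symm (radialMap κ x) = x := by
  rw [radialMap, norm_radialMap h0 κ.monotone, κ.symm_apply_apply, radialMap, smul_smul]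
  rcases eq_or_ne x 0 with rfl | hx
  · exact smul_zero _
  · have hx_pos : 0 < ‖x‖ := norm_pos_iff.2 hx
    have hκ_pos : 0 < κ ‖x‖ := h0 ▸ κ.strictMono hx_pos
    rw [div_mul_div_cancel₀ hκ_pos.ne', div_self hx_pos.ne', one_smul]

lemma exists_homeomorph_radial (κ : ℝ ≃o ℝ) (h0 : κ 0 = 0) :
    ∃ T : E ≃ₜ E, ∀ x, T x = radialMap κ x :=
  have h0symm : κ.symm 0 = 0 := κ.symm_apply_eq.2 h0.symm
  ⟨{  toFun := radialMap κ
      invFun := radialMap κ.symm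
      left_inv := radialMap_symm_radialMap h0
      right_inv := radialMap_symm_radialMap h0symm
      continuous_toFun := continuous_radialMap h0 κ.monotone κ.continuous
      continuous_invFun := continuous_radialMap h0symm κ.symm.monotone κ.symm.continuous },
    fun _ ↦ rfl⟩

lemma exists_homeomorph_closedBall_subset_image {O : Set E} (hO : O ∈ 𝓝 0) {R S : ℝ} (hR : 0 < R)
    (hRS : R < S) :
    ∃ T : E ≃ₜ E, (∀ᶠ x in 𝓝 0, T x = x) ∧ (∀ x ∉ closedBall 0 S, T x = x) ∧
      closedBall 0 R ⊆ T '' O := by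
  obtain ⟨ε, hε, hεO⟩ := nhds_basis_closedBall.mem_iff.1 hO
  obtain ⟨b, hb, hbε, hbR⟩ : ∃ b, 0 < b ∧ b ≤ ε ∧ b < R :=
    ⟨min ε (R / 2), lt_min hε (half_pos hR), min_le_left _ _, min_lt_of_right_lt (half_lt_self hR)⟩
  obtain ⟨κ, hκ_le, hκ_ge, hκb⟩ := exists_orderIso_real_stretch (half_lt_self hb) hbR hRS
  have h0 : κ 0 = 0 := hκ_le 0 (half_pos hb).le
  obtain ⟨T, hT⟩ := exists_homeomorph_radial (E := E) κ h0
  refine ⟨T, ?_, fun x hx ↦ ?_, fun x hx ↦ ⟨T.symm x, hεO ?_, T.apply_symm_apply x⟩⟩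
  · filter_upwards [closedBall_mem_nhds (0 : E) (half_pos hb)] with x hx
    rw [hT, radialMap_eq_self (hκ_le _ (mem_closedBall_zero_iff.1 hx))]
  · rw [mem_closedBall_zero_iff, not_le] at hx
    rw [hT, radialMap_eq_self (hκ_ge _ hx.le)]
  · have hnorm : κ ‖T.symm x‖ = ‖x‖ := by
      rw [← norm_radialMap h0 κ.monotone, ← hT, T.apply_symm_apply]
    rw [mem_closedBall_zero_iff] at hx ⊢
    exact (κ.le_iff_le.1 (by rwa [hnorm, hκb])).trans hbε

lemma exists_homeomorph_apply_zero_eq [CompleteSpace E] {v : E} (hv : ‖v‖ < 1) :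
    ∃ T : E ≃ₜ E, T 0 = v ∧ ∀ x ∉ closedBall 0 1, T x = x := by
  let F : E → E := fun x ↦ x + max 0 (1 - ‖x‖) • v
  -- `F` differs from the identity by a `‖v‖`-Lipschitz map, so it is invertible as `‖v‖ < 1`.
  have hF : ApproximatesLinearOn F (ContinuousLinearEquiv.refl ℝ E : E →L[ℝ] E) univ ‖v‖₊ := by
    intro x _ y _
    have hdiff : F x - F y - (x - y) = (max 0 (1 - ‖x‖) - max 0 (1 - ‖y‖)) • v := by
      simp only [F, sub_smul]; abel
    have hlip : |max 0 (1 - ‖x‖) - max 0 (1 - ‖y‖)| ≤ ‖x - y‖ :=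
      calc |max 0 (1 - ‖x‖) - max 0 (1 - ‖y‖)|
        _ ≤ |(1 - ‖x‖) - (1 - ‖y‖)| := by
          simpa only [max_comm (0 : ℝ)] using abs_max_sub_max_le_abs (1 - ‖x‖) (1 - ‖y‖) 0
        _ = |‖x‖ - ‖y‖| := by rw [sub_sub_sub_cancel_left, abs_sub_comm]
        _ ≤ ‖x - y‖ := abs_norm_sub_norm_le x y
    rw [ContinuousLinearEquiv.coe_refl, ContinuousLinearMap.id_apply, hdiff, norm_smul, mul_comm,
      coe_nnnorm, Real.norm_eq_abs]
    gcongr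
  have hc : Subsingleton E ∨
      ‖v‖₊ < ‖((ContinuousLinearEquiv.refl ℝ E).symm : E →L[ℝ] E)‖₊⁻¹ := by
    refine (subsingleton_or_nontrivial E).imp_right fun (_ : Nontrivial E) ↦ ?_
    have hnorm : ‖((ContinuousLinearEquiv.refl ℝ E).symm : E →L[ℝ] E)‖₊ = 1 :=
      ContinuousLinearMap.nnnorm_id
    rw [hnorm, inv_one]
    exact_mod_cast hv
  have hFT (x : E) : hF.toHomeomorph F hc x = F x := rfl
  refine ⟨hF.toHomeomorph F hc, ?_, fun x hx ↦ ?_⟩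
  · simp only [hFT, F, norm_zero, sub_zero, zero_le_one, sup_of_le_right, one_smul, zero_add]
  · have hx' : 1 - ‖x‖ ≤ 0 := by
      rw [mem_closedBall_zero_iff] at hx; linarith
    rw [hFT]
    simp only [F, max_eq_left hx', zero_smul, add_zero]

lemma exists_isOpenEmbedding_range_eq_ball (c : E) {r : ℝ} (hr : 0 < r) :
    ∃ u : E → E, IsOpenEmbedding u ∧ u 0 = c ∧ range u = ball c r := by
  have hsource := OpenPartialHomeomorph.univBall_source (E := E) c r
  refine ⟨OpenPartialHomeomorph.univBall c r,
    (OpenPartialHomeomorph.univBall c r).isOpenEmbedding hsource,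
    OpenPartialHomeomorph.univBall_apply_zero c r, ?_⟩
  rw [← image_univ, ← hsource, OpenPartialHomeomorph.image_source_eq_target,
    OpenPartialHomeomorph.univBall_target c hr]

variable {X : Type*} [TopologicalSpace X]

lemma exists_isOpenEmbedding_range_subset {e : E → X} (he : IsOpenEmbedding e) (c : E) {N : Set X}
    (hN : N ∈ 𝓝 (e c)) : ∃ f : E → X, IsOpenEmbedding f ∧ f 0 = e c ∧ range f ⊆ N := by
  obtain ⟨ε, hε, hεN⟩ := Metric.mem_nhds_iff.1 (he.continuous.continuousAt hN)
  obtain ⟨u, hu, hu0, hu_range⟩ := exists_isOpenEmbedding_range_eq_ball c hε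
  refine ⟨e ∘ u, he.comp hu, congrArg e hu0, ?_⟩
  rw [range_comp, hu_range, image_subset_iff]
  exact hεN

lemma exists_isOpenEmbedding_of_homeomorph_closedBall {U : Set X} (hU : (interior U).Nonempty)
    (φ : U ≃ₜ closedBall (0 : E) 1) : ∃ e : E → X, IsOpenEmbedding e := by
  obtain ⟨O, hO, hOU⟩ : ∃ O : Set E, IsOpen O ∧
      Subtype.val ⁻¹' O = {x : closedBall (0 : E) 1 | (φ.symm x : X) ∈ interior U} :=
    isOpen_induced_iff.1
      (isOpen_interior.preimage (continuous_subtype_val.comp φ.symm.continuous))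
  obtain ⟨c, hcO, hc⟩ : (O ∩ ball 0 1).Nonempty := by
    obtain ⟨y, hy⟩ := hU
    let z : closedBall (0 : E) 1 := φ ⟨y, interior_subset hy⟩
    have hzO : z ∈ Subtype.val ⁻¹' O := by
      rw [hOU, mem_ofPred, φ.symm_apply_apply]; exact hy
    have hz : (z : E) ∈ closure (ball 0 1) := by
      rw [closure_ball _ one_ne_zero]; exact z.2
    exact mem_closure_iff.1 hz O hO hzO
  obtain ⟨r, hr, hrO⟩ := Metric.isOpen_iff.1 (hO.inter isOpen_ball) c ⟨hcO, hc⟩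
  obtain ⟨u, hu, -, hu_range⟩ := exists_isOpenEmbedding_range_eq_ball c hr
  have huO (x : E) : u x ∈ O ∩ ball 0 1 := hrO (hu_range ▸ mem_range_self x)
  let v : E → closedBall (0 : E) 1 := fun x ↦ ⟨u x, ball_subset_closedBall (huO x).2⟩
  have hv : IsOpenEmbedding v := isOpenEmbedding_of_comp_isEmbedding .subtypeVal hu
  have hvU (x : E) : (φ.symm (v x) : X) ∈ interior U := by
    have hvO : v x ∈ Subtype.val ⁻¹' O := (huO x).1
    rwa [hOU] at hvO
  exact ⟨_, isOpenEmbedding_subtypeVal_comp (φ.symm.isOpenEmbedding.comp hv) hvU⟩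

variable [ProperSpace E] [T2Space X]

lemma exists_homeomorph_image_closedBall_subset_image {f : E → X} (hf : IsOpenEmbedding f)
    {O : Set X} (hO : O ∈ 𝓝 (f 0)) {R S : ℝ} (hR : 0 < R) (hRS : R < S) :
    ∃ Θ : X ≃ₜ X, (∀ᶠ y in 𝓝 (f 0), Θ y = y) ∧ (∀ y ∉ f '' closedBall 0 S, Θ y = y) ∧
      f '' closedBall 0 R ⊆ Θ '' O := by
  obtain ⟨T, hT_nhds, hT_compl, hTO⟩ :=
    exists_homeomorph_closedBall_subset_image (hf.continuous.continuousAt hO) hR hRS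
  obtain ⟨Θ, hΘf, hΘ⟩ := exists_homeomorph_extending hf T (isCompact_closedBall 0 S) hT_compl
  refine ⟨Θ, ?_, hΘ, ?_⟩
  · rw [← hf.map_nhds_eq, eventually_map]
    filter_upwards [hT_nhds] with x hx
    rw [hΘf, hx]
  · rintro _ ⟨x, hx, rfl⟩
    obtain ⟨z, hz, rfl⟩ := hTO hx
    exact ⟨f z, hz, hΘf z⟩

lemma exists_homeomorph_subset_image_of_isCompact {f : E → X} (hf : IsOpenEmbedding f) {C O : Set X}
    (hC : IsCompact C) (hCf : C ⊆ range f) {p : X} (hp : p ∈ range f) (hO : O ∈ 𝓝 p) :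
    ∃ Θ : X ≃ₜ X, (∀ᶠ y in 𝓝 p, Θ y = y) ∧ C ⊆ Θ '' O := by
  obtain ⟨c, rfl⟩ := hp
  let f₀ : E → X := f ∘ Homeomorph.addRight c
  have hf₀ : IsOpenEmbedding f₀ := hf.comp (Homeomorph.addRight c).isOpenEmbedding
  have hf₀_zero : f₀ 0 = f c := congrArg f (zero_add c)
  have hCf₀ : C ⊆ range f₀ := by
    rwa [(Homeomorph.addRight c).surjective.range_comp]
  obtain ⟨R, hR, hCR⟩ := ((hf₀.isInducing.isCompact_preimage_iff hCf₀).2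
    hC).isBounded.subset_closedBall_lt 0 0
  obtain ⟨Θ, hΘ, -, hΘO⟩ := exists_homeomorph_image_closedBall_subset_image hf₀
    (hf₀_zero ▸ hO) hR (lt_add_one R)
  refine ⟨Θ, hf₀_zero ▸ hΘ, ?_⟩
  calc C = f₀ '' (f₀ ⁻¹' C) := (image_preimage_eq_of_subset hCf₀).symm
    _ ⊆ f₀ '' closedBall 0 R := image_mono hCR
    _ ⊆ Θ '' O := hΘO

lemma exists_homeomorph_fixing_subset_image {h f : E → X} (hh : IsOpenEmbedding h)
    (hf : IsOpenEmbedding f) {K : Set X} (hK : IsCompact K) {r s : ℝ} (hr : 0 < r) (hrs : r < s)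
    (hhKf : h '' closedBall 0 s ∪ K ⊆ range f) :
    ∃ ψ : X ≃ₜ X, (∀ x ∈ closedBall 0 r, ψ (h x) = h x) ∧ K ⊆ ψ '' (h '' closedBall 0 s) := by
  set B := h '' closedBall 0 s
  have hB : IsCompact B := (isCompact_closedBall 0 s).image hh.continuous
  have hB_nhds : B ∈ 𝓝 (h 0) :=
    hh.isOpenMap.image_mem_nhds (closedBall_mem_nhds 0 (hr.trans hrs))
  -- `Θ` stretches `B` over `K` but may distort `h '' closedBall 0 r`. Conjugating it by `A`, which
  -- expands the region fixed by `Θ` over `h '' closedBall 0 r`, repairs this.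
  obtain ⟨Θ, hΘ, hBK⟩ := exists_homeomorph_subset_image_of_isCompact hf (hB.union hK) hhKf
    (hhKf (.inl (mem_of_mem_nhds hB_nhds))) hB_nhds
  obtain ⟨A, -, hA_compl, hA⟩ := exists_homeomorph_image_closedBall_subset_image hh hΘ hr hrs
  have hAB : A '' B = B := by
    have hcompl : A '' Bᶜ = Bᶜ := EqOn.image_eq_self hA_compl
    rwa [A.image_compl, compl_inj_iff] at hcompl
  have hAK : K ⊆ A '' (B ∪ K) := fun y hy ↦ by
    by_cases hyB : y ∈ B
    · exact image_mono subset_union_left (hAB.symm ▸ hyB)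
    · exact ⟨y, .inr hy, hA_compl y hyB⟩
  refine ⟨A.symm.trans (Θ.trans A), fun x hx ↦ ?_, ?_⟩
  · obtain ⟨y, hy, hyx⟩ := hA (mem_image_of_mem h hx)
    rw [← hyx, Homeomorph.trans_apply, A.symm_apply_apply, Homeomorph.trans_apply, hy]
  · calc K ⊆ A '' (B ∪ K) := hAK
      _ ⊆ A '' (Θ '' B) := image_mono hBK
      _ = A '' (Θ '' (A.symm '' B)) := by
        conv_rhs => rw [← hAB, A.image_symm, A.preimage_image]
      _ = A.symm.trans (Θ.trans A) '' B := by
        rw [image_image, image_image]; rfl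

lemma exists_isOpenEmbedding_eqOn_closedBall {h f : E → X} (hh : IsOpenEmbedding h)
    (hf : IsOpenEmbedding f) {K : Set X} (hK : IsCompact K) {r s : ℝ} (hr : 0 < r) (hrs : r < s)
    (hhKf : h '' closedBall 0 s ∪ K ⊆ range f) :
    ∃ h' : E → X, IsOpenEmbedding h' ∧ EqOn h' h (closedBall 0 r) ∧ K ⊆ h' '' closedBall 0 s := by
  obtain ⟨ψ, hψ, hKψ⟩ := exists_homeomorph_fixing_subset_image hh hf hK hr hrs hhKf
  exact ⟨ψ ∘ h, ψ.isOpenEmbedding.comp hh, hψ, image_comp ψ h _ ▸ hKψ⟩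

/-- A form of Brown's theorem that a monotone union of open cells is an open cell. -/
theorem nonempty_homeomorph_of_forall_isCompact_subset_range [SigmaCompactSpace X]
    (hX : ∀ K : Set X, IsCompact K → ∃ f : E → X, IsOpenEmbedding f ∧ K ⊆ range f) :
    Nonempty (E ≃ₜ X) := by
  obtain ⟨f₀, hf₀, -⟩ := hX ∅ isCompact_empty
  let V : ℕ → Set E := fun k ↦ closedBall 0 (k + 1)
  have step (k : ℕ) (h : {h : E → X // IsOpenEmbedding h}) :
      ∃ h' : {h : E → X // IsOpenEmbedding h},
        EqOn h'.1 h.1 (V k) ∧ compactCovering X k ⊆ h'.1 '' V (k + 1) := by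
    obtain ⟨f, hf, hsub⟩ := hX (h.1 '' V (k + 1) ∪ compactCovering X k)
      (((isCompact_closedBall _ _).image h.2.continuous).union (isCompact_compactCovering X k))
    obtain ⟨h', hh', hEq, hcover⟩ := exists_isOpenEmbedding_eqOn_closedBall h.2 hf
      (isCompact_compactCovering X k) k.cast_add_one_pos (by push_cast; linarith) hsub
    exact ⟨⟨h', hh'⟩, hEq, hcover⟩
  choose next hnext hcover using step
  let H : ℕ → {h : E → X // IsOpenEmbedding h} := fun k ↦ Nat.rec ⟨f₀, hf₀⟩ next k
  have hV : Monotone V := fun k m hkm ↦ closedBall_subset_closedBall (by gcongr)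
  have hV_nhds (x : E) : ∃ k, V k ∈ 𝓝 x := by
    obtain ⟨k, hk⟩ := exists_nat_gt ‖x‖
    exact ⟨k, closedBall_mem_nhds_of_mem (mem_ball_zero_iff.2 (hk.trans (lt_add_one _)))⟩
  obtain ⟨h, hh, hEq⟩ := exists_isOpenEmbedding_of_eqOn hV hV_nhds (fun k ↦ (H k).2)
    fun k ↦ hnext k (H k)
  have hsurj : Function.Surjective h := fun y ↦ by
    obtain ⟨k, hk⟩ := mem_iUnion.1 (iUnion_compactCovering X ▸ mem_univ y)
    obtain ⟨x, hx, hxy⟩ := hcover k (H k) hk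
    exact ⟨x, (hEq (k + 1) hx).trans hxy⟩
  exact ⟨hh.isEmbedding.toHomeomorphOfSurjective hsurj⟩

end NormedSpace

/-- A *topological fractal structure*: the action is by homeomorphisms and moves every proper closed
subset of `Y` into every nonempty open one. -/
class IsTopologicalFractal (G Y : Type*) [TopologicalSpace Y] [SMul G Y] : Prop
    extends ContinuousConstSMul G Y where
  exists_smul_subset {F U : Set Y} (hF : IsClosed F) (hF' : F ≠ univ) (hU : IsOpen U)
    (hU' : U.Nonempty) : ∃ g : G, g • F ⊆ U

namespace IsTopologicalFractal

variable (G : Type*) {Y Z : Type*} [Group G] [TopologicalSpace Y] [MulAction G Y]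
  [IsTopologicalFractal G Y] [TopologicalSpace Z] {e : Z → Y}

include G in
lemma t2Space [T2Space Z] [Infinite Z] (he : IsOpenEmbedding e) : T2Space Y := by
  refine t2Space_iff_disjoint_nhds.2 fun x y hxy ↦ ?_
  have hfin : (e ⁻¹' {x, y}).Finite := (toFinite {x, y}).preimage he.injective.injOn
  have hne : closure {x, y} ≠ univ := fun h ↦ by
    have hdense : Dense (e ⁻¹' {x, y}) := (dense_iff_closure_eq.2 h).preimage he.isOpenMap
    rw [dense_iff_closure_eq, hfin.isClosed.closure_eq] at hdense
    exact infinite_univ (hdense ▸ hfin)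
  obtain ⟨g, hg⟩ := exists_smul_subset (G := G) isClosed_closure hne he.isOpen_range
    (range_nonempty e)
  obtain ⟨a, ha⟩ := hg (smul_mem_smul_set (subset_closure (mem_insert x {y})))
  obtain ⟨b, hb⟩ := hg (smul_mem_smul_set (subset_closure (mem_insert_of_mem x rfl)))
  have hab : a ≠ b := fun h ↦ hxy (smul_left_cancel g (by rw [← ha, ← hb, h]))
  have hdisj : Disjoint (𝓝 (g • x)) (𝓝 (g • y)) := by
    rw [← ha, ← hb, ← he.map_nhds_eq, ← he.map_nhds_eq, disjoint_map he.injective]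
    exact disjoint_nhds_nhds.2 hab
  have hg_cont : Continuous fun z : Y ↦ g • z := continuous_const_smul g
  exact (hg_cont.tendsto x).disjoint hdisj (hg_cont.tendsto y)

include G in
lemma compactSpace [WeaklyLocallyCompactSpace Z] [Nonempty Z] (he : IsOpenEmbedding e) :
    CompactSpace Y := by
  obtain ⟨K, hK, hKz⟩ := exists_compact_mem_nhds (Classical.arbitrary Z)
  let M : Set Y := e '' interior K
  have hM : IsOpen M := he.isOpenMap _ isOpen_interior
  have hM_ne : M.Nonempty := .image e ⟨_, mem_interior_iff_mem_nhds.2 hKz⟩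
  have hMK : M ⊆ e '' K := image_mono interior_subset
  obtain ⟨g, hg⟩ := exists_smul_subset (G := G) hM.isClosed_compl
    (compl_ne_univ.2 hM_ne) hM hM_ne
  have hM_compl : IsCompact Mᶜ := (Homeomorph.smul g).isCompact_image.1
    ((hK.image he.continuous).of_isClosed_subset (hM.isClosed_compl.smul g) (hg.trans hMK))
  refine ⟨((hK.image he.continuous).union hM_compl).of_isClosed_subset isClosed_univ ?_⟩
  rw [← union_compl_self M]
  exact union_subset_union_left _ hMK

include G in
lemma firstCountableTopology [FirstCountableTopology Z] [Nontrivial Z] [T1Space Y]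
    (he : IsOpenEmbedding e) : FirstCountableTopology Y := by
  refine ⟨fun y ↦ ?_⟩
  have := he.injective.nontrivial
  obtain ⟨g, hg⟩ := exists_smul_subset (G := G) isClosed_singleton (singleton_ne_univ y)
    he.isOpen_range (range_nonempty e)
  obtain ⟨z, hz⟩ := hg (smul_mem_smul_set (mem_singleton y))
  have hnhds : 𝓝 y = comap (g • ·) (map e (𝓝 z)) := by
    rw [he.map_nhds_eq, hz]
    exact (Homeomorph.smul g).isInducing.nhds_eq_comap y
  rw [hnhds]
  infer_instance

variable {E : Type*} [NormedAddCommGroup E] [NormedSpace ℝ E] [Nontrivial E] {e : E → Y}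

include G in
lemma exists_isOpenEmbedding_compl_subset_range (he : IsOpenEmbedding e) {M : Set Y} (hM : IsOpen M)
    (hM' : M.Nonempty) : ∃ f : E → Y, IsOpenEmbedding f ∧ Mᶜ ⊆ range f ∧ range f ≠ univ := by
  obtain ⟨u, hu, -, hu_range⟩ := exists_isOpenEmbedding_range_eq_ball (0 : E) one_pos
  obtain ⟨z, hz⟩ := NormedSpace.exists_lt_norm ℝ E 1
  have heu : IsOpenEmbedding (e ∘ u) := he.comp hu
  have hz_notMem : e z ∉ range (e ∘ u) := by
    rw [range_comp, hu_range, he.injective.mem_set_image, mem_ball_zero_iff]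
    exact hz.not_gt
  obtain ⟨g, hg⟩ := exists_smul_subset (G := G) hM.isClosed_compl (compl_ne_univ.2 hM')
    heu.isOpen_range (range_nonempty _)
  have hrange : range (Homeomorph.smul g⁻¹ ∘ e ∘ u) = g⁻¹ • range (e ∘ u) := range_comp _ _
  refine ⟨Homeomorph.smul g⁻¹ ∘ e ∘ u, (Homeomorph.smul g⁻¹).isOpenEmbedding.comp heu, ?_, ?_⟩
  · rwa [hrange, ← smul_set_subset_iff_subset_inv_smul_set]
  · rw [hrange]
    exact (ne_univ_iff_exists_notMem _).2 ⟨g⁻¹ • e z, fun h ↦ hz_notMem (smul_mem_smul_set_iff.1 h)⟩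

include G in
lemma exists_isOpenEmbedding_notMem_range [ProperSpace E] [T2Space Y] (he : IsOpenEmbedding e)
    (c : E) {K : Set Y} (hK : IsClosed K) (hc : e c ∉ K) :
    ∃ f : E → Y, IsOpenEmbedding f ∧ K ⊆ range f ∧ e c ∉ range f := by
  obtain ⟨e₀, he₀, he₀_zero, he₀K⟩ :=
    exists_isOpenEmbedding_range_subset he c (hK.isOpen_compl.mem_nhds hc)
  let M : Set Y := e₀ '' ball 0 1
  have hM : IsOpen M := he₀.isOpenMap _ isOpen_ball
  obtain ⟨f, hf, hMf, hf_ne⟩ := exists_isOpenEmbedding_compl_subset_range G he hM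
    ((nonempty_ball.2 one_pos).image e₀)
  obtain ⟨q, hq⟩ := (ne_univ_iff_exists_notMem _).1 hf_ne
  obtain ⟨v, hv, rfl⟩ : q ∈ M := by_contra fun h ↦ hq (hMf h)
  obtain ⟨T, hT_zero, hT⟩ := exists_homeomorph_apply_zero_eq (mem_ball_zero_iff.1 hv)
  obtain ⟨Θ, hΘe₀, hΘ⟩ := exists_homeomorph_extending he₀ T (isCompact_closedBall 0 1) hT
  refine ⟨Θ.symm ∘ f, Θ.symm.isOpenEmbedding.comp hf, fun y hy ↦ ?_, ?_⟩
  · have hy' : y ∉ range e₀ := fun h ↦ he₀K h hy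
    obtain ⟨x, rfl⟩ := hMf fun h ↦ hy' (image_subset_range _ _ h)
    exact ⟨x, Θ.symm_apply_eq.2 (hΘ _ fun h ↦ hy' (image_subset_range _ _ h)).symm⟩
  · rintro ⟨x, hx⟩
    refine hq ⟨x, ?_⟩
    rw [← hT_zero, ← hΘe₀, he₀_zero, ← hx, Function.comp_apply, Θ.apply_symm_apply]

include G in
lemma nonempty_homeomorph_compl_singleton [ProperSpace E] [T2Space Y] [CompactSpace Y]
    (he : IsOpenEmbedding e) (c : E) : Nonempty (E ≃ₜ ({e c}ᶜ : Set Y)) := by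
  have := firstCountableTopology G he
  have : SigmaCompactSpace ({e c}ᶜ : Set Y) :=
    isSigmaCompact_iff_sigmaCompactSpace.1 (isSigmaCompact_compl_of_isGδ (.singleton _))
  refine nonempty_homeomorph_of_forall_isCompact_subset_range fun K hK ↦ ?_
  have hc : e c ∉ Subtype.val '' K := fun ⟨x, _, hx⟩ ↦ x.2 hx
  obtain ⟨f, hf, hKf, hcf⟩ := exists_isOpenEmbedding_notMem_range G he c
    (hK.image continuous_subtype_val).isClosed hc
  have hf_mem (x : E) : f x ∈ ({e c}ᶜ : Set Y) := fun h ↦ hcf ⟨x, h⟩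
  refine ⟨codRestrict f _ hf_mem, isOpenEmbedding_of_comp_isEmbedding .subtypeVal hf, fun y hy ↦ ?_⟩
  obtain ⟨x, hx⟩ := hKf (mem_image_of_mem _ hy)
  exact ⟨x, Subtype.ext hx⟩

end IsTopologicalFractal

theorem sphere_of_fractal_ball_general (G : Type*) {Y E ι : Type*} [Group G] [TopologicalSpace Y]
    [MulAction G Y] [IsTopologicalFractal G Y] [NormedAddCommGroup E] [NormedSpace ℝ E]
    [FiniteDimensional ℝ E] [Nontrivial E] [Fintype ι] (hι : finrank ℝ E + 1 = Fintype.card ι)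
    {U : Set Y} (hU : (interior U).Nonempty) (φ : U ≃ₜ closedBall (0 : E) 1) :
    Nonempty (Y ≃ₜ sphere (0 : EuclideanSpace ℝ ι) 1) := by
  have : Infinite E := PreconnectedSpace.infinite
  have := FiniteDimensional.proper_real E
  obtain ⟨e, he⟩ := exists_isOpenEmbedding_of_homeomorph_closedBall hU φ
  have := IsTopologicalFractal.t2Space G he
  have := IsTopologicalFractal.compactSpace G he
  obtain ⟨ψ⟩ := IsTopologicalFractal.nonempty_homeomorph_compl_singleton G he 0
  have hψ : IsEmbedding (Subtype.val ∘ ψ) := IsEmbedding.subtypeVal.comp ψ.isEmbedding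
  have hψ_range : range (Subtype.val ∘ ψ) = {e 0}ᶜ := by
    rw [ψ.surjective.range_comp, Subtype.range_coe]
  exact ⟨(OnePoint.equivOfIsEmbeddingOfRangeEq (e 0) _ hψ hψ_range).symm.trans
    (onePointEquivSphereOfFinrankEq hι)⟩

/-- Let `n ≥ 1`, let `Y` be a compact metric space, and let a group `G` act on
`Y` by homeomorphisms with a topological fractal structure. If `Y` contains a closed subset
`U` with nonempty interior which is homeomorphic to the closed unit ball in Euclidean
`n`-space, then `Y` is homeomorphic to the `n`-sphere. -/
theorem sphere_of_fractal_ball {G Y : Type*} [Group G] [MetricSpace Y] [CompactSpace Y]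
    [MulAction G Y] (n : ℕ) (hn : 1 ≤ n)
    (hcont : ∀ g : G, Continuous fun y : Y => g • y)
    (hfractal : ∀ F : Set Y, IsClosed F → F ≠ Set.univ →
      ∀ U : Set Y, IsOpen U → U.Nonempty → ∃ g : G, g • F ⊆ U)
    (U : Set Y) (hUclosed : IsClosed U) (hUint : (interior U).Nonempty)
    (hUball : Nonempty (U ≃ₜ (Metric.closedBall (0 : EuclideanSpace ℝ (Fin n)) 1))) :
    Nonempty (Y ≃ₜ (Metric.sphere (0 : EuclideanSpace ℝ (Fin (n + 1))) 1)) := by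
  have : IsTopologicalFractal G Y :=
    { continuous_const_smul := hcont
      exists_smul_subset := fun hF hF' ↦ hfractal _ hF hF' _ }
  have : Nonempty (Fin n) := ⟨⟨0, hn⟩⟩
  exact hUball.elim (sphere_of_fractal_ball_general G (by simp) hUint)
end
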